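/- arXiv:1305.6790 — 6 statements merged into one kernel-verified Lean document; each statement's English description precedes it below -/
import Mathlib

section
/- Let 1 ≤ k ≤ n and let A = (α_{ij}) ∈ Λ_n^k be a canonical matrix. Then the first row of A consists of n−k zeros followed by k ones (α_{1,1} = ⋯ = α_{1,n−k} = 0 and α_{1,n−k+1} = ⋯ = α_{1,n} = 1), and likewise the first column of A consists of n−k zeros followed by k ones (α_{1,1} = ⋯ = α_{n−k,1} = 0 and α_{n−k+1,1} = ⋯ = α_{n,1} = 1). -/
/-- `Lambda n k` : the set of `n×n` binary matrices with exactly `k` ones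
in each row and each column. -/
def Lambda (n k : ℕ) : Set (Matrix (Fin n) (Fin n) Bool) :=
  {A | (∀ i, (Finset.univ.filter fun j => A i j = true).card = k) ∧
       (∀ j, (Finset.univ.filter fun i => A i j = true).card = k)}

/-- `A ∼ B` iff `A` is obtained from `B` by permuting rows and/or columns. -/
def rcEquiv {n : ℕ} (A B : Matrix (Fin n) (Fin n) Bool) : Prop :=
  ∃ σ τ : Equiv.Perm (Fin n), ∀ i j, A i j = B (σ i) (τ j)

/-- `mu n k` : the number of equivalence classes of `Λ_n^k` under `∼`. -/
noncomputable def mu (n k : ℕ) : ℕ :=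
  Nat.card (Quot fun A B : {M : Matrix (Fin n) (Fin n) Bool // M ∈ Lambda n k} =>
    rcEquiv A.1 B.1)

/-- The natural number whose `n`-digit binary representation is row `i` of `A`. -/
def rowVal {n : ℕ} (A : Matrix (Fin n) (Fin n) Bool) (i : Fin n) : ℕ :=
  ∑ j : Fin n, if A i j = true then 2 ^ (n - 1 - (j : ℕ)) else 0

/-- A matrix is canonical when the row values of `A` and of `Aᵀ` are both
nondecreasing. -/
def IsCanonical {n : ℕ} (A : Matrix (Fin n) (Fin n) Bool) : Prop :=
  Monotone (rowVal A) ∧ Monotone (rowVal A.transpose)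

/-!
The leading digit of a row is `1` exactly when the value of the row is at least `2 ^ (n - 1)`, so
nondecreasing row values make the ones of the first column a final segment of it; only its length
is then left to be read off. The first row is the first column of the transpose.
-/

lemma mem_iff_sub_card_le_of_isUpperSet {n : ℕ} {S : Finset (Fin n)}
    (hS : IsUpperSet (S : Set (Fin n))) (j : Fin n) : j ∈ S ↔ n - S.card ≤ (j : ℕ) := by
  constructor
  · intro hj
    have hsub : Finset.Ici j ⊆ S := fun a ha ↦ hS (Finset.mem_Ici.mp ha) hj
    have hcard := Finset.card_le_card hsub
    rw [Fin.card_Ici] at hcard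
    lia
  · contrapose!
    intro hj
    have hsub : S ⊆ Finset.Ioi j := fun a ha ↦
      Finset.mem_Ioi.mpr (lt_of_not_ge fun haj ↦ hj (hS haj ha))
    have hcard := Finset.card_le_card hsub
    rw [Fin.card_Ioi] at hcard
    lia

lemma eq_true_iff_sub_card_le_of_monotone {n : ℕ} {f : Fin n → Bool} (hf : Monotone f)
    (i : Fin n) :
    f i = true ↔ n - (Finset.univ.filter fun a ↦ f a = true).card ≤ (i : ℕ) := by
  have hupper : IsUpperSet ((Finset.univ.filter fun a ↦ f a = true : Finset (Fin n)) :
      Set (Fin n)) := by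
    intro a b hab ha
    simp only [Finset.coe_filter_univ, Set.mem_ofPred_eq] at ha ⊢
    exact Bool.le_iff_imp.mp (hf hab) ha
  rw [← mem_iff_sub_card_le_of_isUpperSet hupper, Finset.mem_filter_univ]

lemma rowVal_eq_sum_image_rev {n : ℕ} (A : Matrix (Fin n) (Fin n) Bool) (i : Fin n) :
    rowVal A i =
      ∑ d ∈ (Finset.univ.filter fun j ↦ A i j = true).image fun j ↦ (j.rev : ℕ), 2 ^ d := by
  have hinj : Function.Injective fun j : Fin n ↦ (j.rev : ℕ) :=
    Fin.val_injective.comp Fin.rev_injective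
  rw [Finset.sum_image hinj.injOn, Finset.sum_filter]
  simp only [rowVal, Fin.val_rev, Nat.sub_sub, Nat.add_comm]

lemma two_pow_le_rowVal_iff {n : ℕ} [NeZero n] (A : Matrix (Fin n) (Fin n) Bool) (i : Fin n) :
    2 ^ (n - 1) ≤ rowVal A i ↔ A i 0 = true := by
  rw [rowVal_eq_sum_image_rev]
  constructor
  · contrapose!
    intro hlead
    refine Nat.geomSum_lt le_rfl fun d hd ↦ ?_
    obtain ⟨j, hj, rfl⟩ := Finset.mem_image.mp hd
    have hj0 : j ≠ 0 := by
      rintro rfl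
      exact hlead (Finset.mem_filter.mp hj).2
    have : 0 < (j : ℕ) := Fin.pos_iff_ne_zero.mpr hj0
    rw [Fin.val_rev]
    lia
  · intro hlead
    have hmem : n - 1 ∈ (Finset.univ.filter fun j ↦ A i j = true).image fun j ↦ (j.rev : ℕ) :=
      Finset.mem_image.mpr ⟨0, by simpa using hlead, by simp⟩
    exact Finset.single_le_sum (f := fun d ↦ 2 ^ d) (fun _ _ ↦ Nat.zero_le _) hmem

lemma monotone_firstCol_of_monotone_rowVal {n : ℕ} [NeZero n]
    {A : Matrix (Fin n) (Fin n) Bool} (hA : Monotone (rowVal A)) :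
    Monotone fun i ↦ A i 0 := by
  intro a b hab
  rw [Bool.le_iff_imp, ← two_pow_le_rowVal_iff, ← two_pow_le_rowVal_iff]
  exact fun ha ↦ ha.trans (hA hab)

theorem first_row_col_of_canonical_general {n : ℕ} [NeZero n] {A : Matrix (Fin n) (Fin n) Bool}
    (hcan : IsCanonical A) :
    (∀ j : Fin n, A 0 j = true ↔
      n - (Finset.univ.filter fun j ↦ A 0 j = true).card ≤ (j : ℕ)) ∧
    (∀ i : Fin n, A i 0 = true ↔
      n - (Finset.univ.filter fun i ↦ A i 0 = true).card ≤ (i : ℕ)) :=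
  ⟨eq_true_iff_sub_card_le_of_monotone (monotone_firstCol_of_monotone_rowVal hcan.2),
    eq_true_iff_sub_card_le_of_monotone (monotone_firstCol_of_monotone_rowVal hcan.1)⟩

theorem first_row_col_of_canonical (n k : ℕ) (hk : 1 ≤ k) (hkn : k ≤ n)
    (A : Matrix (Fin n) (Fin n) Bool) (hA : A ∈ Lambda n k)
    (hcan : IsCanonical A) :
    (∀ j : Fin n,
      A ⟨0, Nat.lt_of_lt_of_le Nat.one_pos (hk.trans hkn)⟩ j = true ↔ n - k ≤ (j : ℕ)) ∧
    (∀ i : Fin n,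
      A i ⟨0, Nat.lt_of_lt_of_le Nat.one_pos (hk.trans hkn)⟩ = true ↔ n - k ≤ (i : ℕ)) := by
  have : NeZero n := ⟨by lia⟩
  have h := first_row_col_of_canonical_general hcan
  rwa [hA.1 0, hA.2 0] at h
end

section
/- For every integer n ≥ 2, the unique canonical matrix in Λ_n^{n−1} is the matrix with 0 on the main diagonal and 1 in every off-diagonal position, i.e. A(i,j) = 0 if i = j and A(i,j) = 1 if i ≠ j. -/
/-!
A matrix in `Λ_n^{n-1}` has exactly one zero in each row and each column, so it is the complement
of the permutation matrix of some `σ`. A row whose only zero is in column `k`, counted from `0`, has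
value `(2^n - 1) - 2^(n-1-k)`, which increases with `k`; hence the row values are nondecreasing iff
`σ` is monotone, and the only monotone permutation is the identity.
-/

lemma card_filter_eq_card_sub_one_iff {ι : Type*} [Fintype ι] [Nonempty ι] {p : ι → Prop}
    [DecidablePred p] :
    (Finset.univ.filter p).card = Fintype.card ι - 1 ↔ ∃! k, ¬ p k := by
  have hsum := Finset.card_filter_add_card_filter_not (s := Finset.univ) p
  have hpos : 0 < Fintype.card ι := Fintype.card_pos
  rw [Finset.card_univ] at hsum
  rw [Fintype.existsUnique_iff_card_one]
  omega

section GraphCompl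

open Matrix

variable {α β : Type*} [DecidableEq β]

/-- The Boolean matrix whose zeros are exactly the entries `(i, f i)`, that is, the complement of
the indicator matrix of the graph of `f`. For a permutation `f` it is the complement of the
permutation matrix of `f`. -/
def graphCompl (f : α → β) : Matrix α β Bool :=
  Matrix.of fun i j => decide (f i ≠ j)

lemma graphCompl_eq_false_iff {f : α → β} {i : α} {j : β} :
    graphCompl f i j = false ↔ f i = j := by
  simp [graphCompl]

lemma eq_graphCompl_iff {A : Matrix α β Bool} {f : α → β} :
    A = graphCompl f ↔ ∀ {i j}, A i j = false ↔ f i = j := by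
  refine ⟨by rintro rfl; exact graphCompl_eq_false_iff, fun h => ?_⟩
  ext i j
  rw [Bool.eq_iff_iff, ← not_iff_not, Bool.not_eq_true, Bool.not_eq_true, h,
    graphCompl_eq_false_iff]

lemma transpose_graphCompl [DecidableEq α] (e : α ≃ β) :
    (graphCompl e)ᵀ = graphCompl e.symm := by
  rw [eq_graphCompl_iff]
  intro j i
  rw [transpose_apply, graphCompl_eq_false_iff, e.symm_apply_eq, eq_comm]

lemma forall_existsUnique_eq_false_iff_exists_graphCompl {A : Matrix α β Bool} :
    ((∀ i, ∃! j, A i j = false) ∧ ∀ j, ∃! i, A i j = false) ↔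
      ∃ e : α ≃ β, A = graphCompl e := by
  simp only [eq_graphCompl_iff]
  constructor
  · rintro ⟨hrow, hcol⟩
    obtain ⟨f, hf⟩ := forall_existsUnique_iff.1 hrow
    have hbij : f.Bijective := (Function.bijective_iff_existsUnique f).2 <| by
      simpa only [hf] using hcol
    exact ⟨Equiv.ofBijective f hbij, hf⟩
  · rintro ⟨e, he⟩
    simp only [he]
    exact ⟨fun i => existsUnique_eq', e.bijective.existsUnique⟩

end GraphCompl

section FinMatrix

open Matrix

variable {n : ℕ}

lemma mem_Lambda_sub_one_iff_exists_graphCompl [NeZero n] {A : Matrix (Fin n) (Fin n) Bool} :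
    A ∈ Lambda n (n - 1) ↔ ∃ σ : Equiv.Perm (Fin n), A = graphCompl σ := by
  have hcard {p : Fin n → Prop} [DecidablePred p] :
      (Finset.univ.filter p).card = n - 1 ↔ ∃! k, ¬ p k := by
    simpa only [Fintype.card_fin] using card_filter_eq_card_sub_one_iff (p := p)
  rw [← forall_existsUnique_eq_false_iff_exists_graphCompl]
  simp only [Lambda, Set.mem_ofPred_eq, hcard, Bool.not_eq_true]

lemma rowVal_graphCompl_add_two_pow (f : Fin n → Fin n) (i : Fin n) :
    rowVal (graphCompl f) i + 2 ^ (n - 1 - (f i : ℕ)) = ∑ j : Fin n, 2 ^ (n - 1 - (j : ℕ)) := by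
  have hrow : rowVal (graphCompl f) i = ∑ j ∈ Finset.univ.erase (f i), 2 ^ (n - 1 - (j : ℕ)) := by
    simp only [rowVal, graphCompl, of_apply, decide_eq_true_eq, ← Finset.sum_filter,
      Finset.filter_ne]
  rw [hrow, Finset.sum_erase_add _ _ (Finset.mem_univ _)]

lemma rowVal_graphCompl_le_iff {f : Fin n → Fin n} {i i' : Fin n} :
    rowVal (graphCompl f) i ≤ rowVal (graphCompl f) i' ↔ f i ≤ f i' := by
  have hsum := (rowVal_graphCompl_add_two_pow f i).trans (rowVal_graphCompl_add_two_pow f i').symm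
  have hpow : 2 ^ (n - 1 - (f i' : ℕ)) ≤ 2 ^ (n - 1 - (f i : ℕ)) ↔
      n - 1 - (f i' : ℕ) ≤ n - 1 - (f i : ℕ) := Nat.pow_le_pow_iff_right one_lt_two
  rw [Fin.le_def]
  omega

lemma monotone_rowVal_graphCompl_iff {f : Fin n → Fin n} :
    Monotone (rowVal (graphCompl f)) ↔ Monotone f := by
  simp only [Monotone, rowVal_graphCompl_le_iff]

lemma monotone_rowVal_graphCompl_perm_iff {σ : Equiv.Perm (Fin n)} :
    Monotone (rowVal (graphCompl σ)) ↔ σ = 1 :=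
  monotone_rowVal_graphCompl_iff.trans σ.monotone_iff

lemma isCanonical_iff_monotone_rowVal [NeZero n] {A : Matrix (Fin n) (Fin n) Bool}
    (hA : A ∈ Lambda n (n - 1)) : IsCanonical A ↔ Monotone (rowVal A) := by
  obtain ⟨σ, rfl⟩ := mem_Lambda_sub_one_iff_exists_graphCompl.1 hA
  have htranspose : (graphCompl σ)ᵀ = graphCompl ⇑σ⁻¹ := transpose_graphCompl σ
  rw [IsCanonical, htranspose, monotone_rowVal_graphCompl_perm_iff,
    monotone_rowVal_graphCompl_perm_iff, inv_eq_one, and_self]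

end FinMatrix

theorem canonical_in_Lambda_n_sub_one_iff_offdiagonal_general (n : ℕ) [NeZero n]
    (A : Matrix (Fin n) (Fin n) Bool) :
    (A ∈ Lambda n (n - 1) ∧ Monotone (rowVal A)) ↔
      A = Matrix.of fun i j : Fin n => decide (i ≠ j) := by
  change _ ↔ A = graphCompl (1 : Equiv.Perm (Fin n))
  rw [mem_Lambda_sub_one_iff_exists_graphCompl]
  constructor
  · rintro ⟨⟨σ, rfl⟩, hmono⟩
    rw [monotone_rowVal_graphCompl_perm_iff.1 hmono]
  · rintro rfl
    exact ⟨⟨1, rfl⟩, monotone_rowVal_graphCompl_perm_iff.2 rfl⟩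

theorem canonical_in_Lambda_n_sub_one_iff_offdiagonal (n : ℕ) (hn : 2 ≤ n)
    (A : Matrix (Fin n) (Fin n) Bool) :
    (A ∈ Lambda n (n - 1) ∧ IsCanonical A) ↔
      A = Matrix.of fun i j : Fin n => decide (i ≠ j) := by
  have : NeZero n := ⟨by omega⟩
  rw [and_congr_right isCanonical_iff_monotone_rowVal,
    canonical_in_Lambda_n_sub_one_iff_offdiagonal_general]
end

section
/- Every equivalence class of Λ_n^k under the relation ∼ (row and column permutations) contains at least one canonical matrix; that is, for every A ∈ Λ_n^k there exist a permutation of the rows and a permutation of the columns of A yielding a canonical matrix. -/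
/-!
Minimize the bilinear form `u ⬝ᵥ A *ᵥ v`, with strictly decreasing weights `u` and `v`, over all
rearrangements of the rows and columns of `A`. Exchanging two rows at which the entries of `A *ᵥ v`
are inverted would decrease the form, so at a minimum these entries are nondecreasing; as the form
also equals `u ᵥ* A ⬝ᵥ v`, the same holds for the entries of `u ᵥ* A`. For a binary
matrix and the weights `2 ^ (n - 1 - j)`, the two vectors list the numbers read off from the rows
and from the columns.
-/

open Matrix

section Rearrangement

variable {R ι κ : Type*} [Fintype ι] [Fintype κ]

theorem dotProduct_comp_swap_lt [Semiring R] [PartialOrder R] [IsStrictOrderedRing R]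
    [ExistsAddOfLE R] [DecidableEq ι] {w f : ι → R} {i j : ι} (hw : w j < w i) (hf : f j < f i) :
    w ⬝ᵥ f ∘ Equiv.swap i j < w ⬝ᵥ f := by
  have hij : i ≠ j := ne_of_apply_ne w hw.ne'
  have off_pair : ∑ k ∈ {i, j}ᶜ, w k * f (Equiv.swap i j k) = ∑ k ∈ {i, j}ᶜ, w k * f k := by
    refine Finset.sum_congr rfl fun k hk => ?_
    simp only [Finset.mem_compl, Finset.mem_insert, Finset.mem_singleton, not_or] at hk
    rw [Equiv.swap_apply_of_ne_of_ne hk.1 hk.2]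
  have on_pair : w i * f j + w j * f i < w i * f i + w j * f j :=
    mul_add_mul_lt_mul_add_mul' hw hf
  calc w ⬝ᵥ f ∘ Equiv.swap i j
      = w i * f j + w j * f i + ∑ k ∈ {i, j}ᶜ, w k * f k := by
        simp only [dotProduct, Function.comp_apply, ← Finset.sum_add_sum_compl {i, j},
          Finset.sum_pair hij, Equiv.swap_apply_left, Equiv.swap_apply_right, off_pair]
    _ < w i * f i + w j * f j + ∑ k ∈ {i, j}ᶜ, w k * f k := by gcongr
    _ = w ⬝ᵥ f := by
        rw [dotProduct, ← Finset.sum_add_sum_compl {i, j}, Finset.sum_pair hij]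

theorem monotone_of_forall_dotProduct_le_comp_perm [Semiring R] [LinearOrder R]
    [IsStrictOrderedRing R] [ExistsAddOfLE R] [PartialOrder ι] {w f : ι → R} (hw : StrictAnti w)
    (hmin : ∀ π : Equiv.Perm ι, w ⬝ᵥ f ≤ w ⬝ᵥ f ∘ π) : Monotone f := by
  classical
  refine monotone_iff_forall_lt.2 fun i j hij => le_of_not_gt fun hf => ?_
  exact (hmin (Equiv.swap i j)).not_gt (dotProduct_comp_swap_lt (hw hij) hf)

theorem exists_perm_monotone_mulVec_vecMul [CommSemiring R] [LinearOrder R]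
    [IsStrictOrderedRing R] [ExistsAddOfLE R] [PartialOrder ι] [PartialOrder κ]
    {u : ι → R} {v : κ → R} (hu : StrictAnti u) (hv : StrictAnti v) (A : Matrix ι κ R) :
    ∃ (σ : Equiv.Perm ι) (τ : Equiv.Perm κ),
      Monotone (A.submatrix σ τ *ᵥ v) ∧ Monotone (u ᵥ* A.submatrix σ τ) := by
  obtain ⟨⟨σ, τ⟩, hmin⟩ := Finite.exists_min
    fun p : Equiv.Perm ι × Equiv.Perm κ => u ⬝ᵥ A.submatrix p.1 p.2 *ᵥ v
  refine ⟨σ, τ, monotone_of_forall_dotProduct_le_comp_perm hu fun π => hmin (σ * π, τ),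
    monotone_of_forall_dotProduct_le_comp_perm hv fun π => ?_⟩
  calc v ⬝ᵥ u ᵥ* A.submatrix σ τ
      = u ⬝ᵥ A.submatrix σ τ *ᵥ v := by rw [dotProduct_comm, dotProduct_mulVec]
    _ ≤ u ⬝ᵥ A.submatrix σ ⇑(τ * π) *ᵥ v := hmin (σ, τ * π)
    _ = v ⬝ᵥ (u ᵥ* A.submatrix σ τ) ∘ π := by rw [dotProduct_mulVec, dotProduct_comm]; rfl

end Rearrangement

section Binary

variable {n : ℕ}

/-- The place values of an `n`-digit binary numeral, most significant digit first: the weights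
that turn `rowVal` into a matrix-vector product. -/
def placeValue (n : ℕ) (j : Fin n) : ℕ :=
  2 ^ (n - 1 - (j : ℕ))

theorem placeValue_strictAnti : StrictAnti (placeValue n) := fun _ _ hij =>
  Nat.pow_lt_pow_right one_lt_two (by lia)

theorem rowVal_eq_mulVec (A : Matrix (Fin n) (Fin n) Bool) :
    rowVal A = A.map Bool.toNat *ᵥ placeValue n := by
  ext i
  refine Finset.sum_congr rfl fun j _ => ?_
  cases h : A i j <;> simp [h, placeValue]

theorem rowVal_transpose_eq_vecMul (A : Matrix (Fin n) (Fin n) Bool) :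
    rowVal Aᵀ = placeValue n ᵥ* A.map Bool.toNat := by
  rw [rowVal_eq_mulVec, transpose_map, mulVec_transpose]

end Binary

theorem exists_canonical_in_class_general (n : ℕ) (A : Matrix (Fin n) (Fin n) Bool) :
    ∃ σ τ : Equiv.Perm (Fin n),
      IsCanonical (Matrix.of fun i j => A (σ i) (τ j)) := by
  obtain ⟨σ, τ, hrow, hcol⟩ := exists_perm_monotone_mulVec_vecMul
    placeValue_strictAnti placeValue_strictAnti (A.map Bool.toNat)
  refine ⟨σ, τ, ?_, ?_⟩
  · rw [rowVal_eq_mulVec]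
    exact hrow
  · rw [rowVal_transpose_eq_vecMul]
    exact hcol

theorem exists_canonical_in_class (n k : ℕ) (A : Matrix (Fin n) (Fin n) Bool)
    (hA : A ∈ Lambda n k) :
    ∃ σ τ : Equiv.Perm (Fin n),
      IsCanonical (Matrix.of fun i j => A (σ i) (τ j)) :=
  exists_canonical_in_class_general n A
end

section
/- Let k ≥ 3 be an integer. The number of canonical matrices A = (α_{ij}) ∈ Λ_{k+2}^k with α_{2,2} = 0 equals the number of canonical matrices in Λ_k^{k−2}; a bijection is given by deleting the first two rows and the first two columns of A. -/
/-!
A canonical `A ∈ Λ_{k+2}^k` has exactly two zeros in its first row, and they come first because the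
first digits of the nondecreasing columns form a nondecreasing sequence; likewise for the first
column. Together with `α_{2,2} = 0` this makes the leading `2 × 2` block zero, so the first two rows
and columns have no room for a further zero and `A = [[0, J], [J, B]]` with all entries of `J` equal
to one. Prefixing the same ones to all rows of `B` shifts their values by one constant, and the new
rows `0 ⋯ 0 1 ⋯ 1` are equal to each other and smaller than the rest, so `A` is canonical if and
only if `B` is. Nothing in this last part depends on the size of the zero block.
-/

section BinaryValue

variable {n : ℕ} {A : Matrix (Fin n) (Fin n) Bool}

lemma rowVal_eq_sum_two_pow (A : Matrix (Fin n) (Fin n) Bool) (i : Fin n) :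
    rowVal A i =
      ∑ e ∈ Finset.image (fun j : Fin n => n - 1 - (j : ℕ)) {j | A i j = true}, 2 ^ e := by
  rw [rowVal, ← Finset.sum_filter, Finset.sum_image]
  intro j _ j' _ h
  simp only at h
  omega

lemma rowVal_lt_rowVal_of_first_diff {i i' j : Fin n} (hlt : A i j < A i' j)
    (heq : ∀ l < j, A i l = A i' l) : rowVal A i < rowVal A i' := by
  obtain ⟨hij, hi'j⟩ := Bool.lt_iff.mp hlt
  rw [rowVal_eq_sum_two_pow, rowVal_eq_sum_two_pow,
    Finset.geomSum_lt_geomSum_iff_toColex_lt_toColex le_rfl,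
    Finset.Colex.toColex_lt_toColex_iff_exists_forall_lt]
  simp only [Finset.mem_image, Finset.mem_filter, Finset.mem_univ, true_and]
  refine ⟨_, ⟨j, hi'j, rfl⟩, ?_, ?_⟩
  · rintro ⟨l, hl, hlj⟩
    obtain rfl : l = j := by omega
    simp [hij] at hl
  · rintro _ ⟨l, hl, rfl⟩ hl'
    have hjl : j < l := by
      by_contra! hle
      rcases hle.eq_or_lt with rfl | hlt
      · simp [hij] at hl
      · exact hl' ⟨l, heq l hlt ▸ hl, rfl⟩
    omega

lemma monotone_firstRow [NeZero n] (h : Monotone (rowVal A.transpose)) : Monotone (A 0) :=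
  fun _ _ hij => not_lt.mp fun hlt =>
    (h hij).not_gt <| rowVal_lt_rowVal_of_first_diff (A := A.transpose) hlt
      fun l hl => absurd hl (Fin.not_lt_zero l)

lemma eq_false_of_monotone_of_card_lt {f : Fin n → Bool} (hf : Monotone f) {j : Fin n}
    (hj : Finset.card {i | f i = true} + j < n) : f j = false := by
  by_contra hfj
  have hsub : Finset.Ici j ⊆ ({i | f i = true} : Finset (Fin n)) := fun i hi => by
    have hji := hf (Finset.mem_Ici.mp hi)
    rw [Bool.eq_true_of_not_eq_false hfj] at hji
    simpa using Bool.eq_true_of_true_le hji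
  have := Finset.card_le_card hsub
  rw [Fin.card_Ici] at this
  omega

end BinaryValue

section BlockIndex

variable {r k : ℕ}

/-- The splitting of the `k + r` row or column indices into the first `r` and the last `k`. The
order of the summands in `k + r` makes the latter the indices `i.addNat r`. -/
def blockIndex (r k : ℕ) : Fin r ⊕ Fin k ≃ Fin (k + r) :=
  finSumFinEquiv.trans (finCongr (Nat.add_comm r k))

@[simp]
lemma blockIndex_inl (i : Fin r) : blockIndex r k (.inl i) = i.castLE le_add_self := rfl

@[simp]
lemma blockIndex_inr (i : Fin k) : blockIndex r k (.inr i) = i.addNat r :=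
  Fin.ext (Nat.add_comm r i)

lemma forall_castLE_addNat {P : Fin (k + r) → Prop} :
    (∀ i, P i) ↔ (∀ i : Fin r, P (i.castLE le_add_self)) ∧ ∀ i : Fin k, P (i.addNat r) := by
  rw [← (blockIndex r k).forall_congr_right, Sum.forall]
  simp only [blockIndex_inl, blockIndex_inr]

lemma sum_castLE_addNat {M : Type*} [AddCommMonoid M] (f : Fin (k + r) → M) :
    ∑ i, f i = ∑ i : Fin r, f (i.castLE le_add_self) + ∑ i : Fin k, f (i.addNat r) := by
  rw [← (blockIndex r k).sum_comp, Fintype.sum_sum_type]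
  simp only [blockIndex_inl, blockIndex_inr]

lemma card_castLE_addNat (p : Fin (k + r) → Prop) [DecidablePred p] :
    Finset.card {i | p i} = Finset.card {i : Fin r | p (i.castLE le_add_self)} +
      Finset.card {i : Fin k | p (i.addNat r)} := by
  simp only [Finset.card_filter, sum_castLE_addNat]

lemma forall_addNat_of_card_eq {p : Fin (k + r) → Prop} [DecidablePred p]
    (hcard : Finset.card {i | p i} = k) (hp : ∀ i : Fin r, ¬ p (i.castLE le_add_self)) :
    ∀ i : Fin k, p (i.addNat r) := by
  have htail : Finset.card {i : Fin k | p (i.addNat r)} = (Finset.univ : Finset (Fin k)).card := by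
    simpa [card_castLE_addNat, hp] using hcard
  exact fun i => Finset.card_filter_eq_iff.mp htail i (Finset.mem_univ i)

end BlockIndex

section Border

variable {r k : ℕ} {A : Matrix (Fin (k + r)) (Fin (k + r)) Bool} {B : Matrix (Fin k) (Fin k) Bool}

/-- The matrix obtained by deleting the first `r` rows and columns. -/
def deleteLeading (r : ℕ) (A : Matrix (Fin (k + r)) (Fin (k + r)) Bool) :
    Matrix (Fin k) (Fin k) Bool :=
  Matrix.of fun i j => A (i.addNat r) (j.addNat r)

/-- The block matrix `[[0, J], [J, B]]`, where `0` is the zero matrix of size `r` and `J` stands for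
matrices of ones. It is the inverse construction to deleting the first `r` rows and columns. -/
def border (r : ℕ) (B : Matrix (Fin k) (Fin k) Bool) :
    Matrix (Fin (k + r)) (Fin (k + r)) Bool :=
  Matrix.reindex (blockIndex r k) (blockIndex r k) <|
    Matrix.fromBlocks (.of fun _ _ => false) (.of fun _ _ => true) (.of fun _ _ => true) B

lemma border_blockIndex (B : Matrix (Fin k) (Fin k) Bool) (x y : Fin r ⊕ Fin k) :
    border r B (blockIndex r k x) (blockIndex r k y) =
      Matrix.fromBlocks (.of fun _ _ => false) (.of fun _ _ => true) (.of fun _ _ => true) B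
        x y := by
  simp only [border, Matrix.reindex_apply, Matrix.submatrix_apply, Equiv.symm_apply_apply]

@[simp]
lemma border_castLE_castLE (B : Matrix (Fin k) (Fin k) Bool) (i j : Fin r) :
    border r B (i.castLE le_add_self) (j.castLE le_add_self) = false :=
  border_blockIndex B (.inl i) (.inl j)

@[simp]
lemma border_castLE_addNat (B : Matrix (Fin k) (Fin k) Bool) (i : Fin r) (j : Fin k) :
    border r B (i.castLE le_add_self) (j.addNat r) = true := by
  simpa using border_blockIndex B (.inl i) (.inr j)

@[simp]
lemma border_addNat_castLE (B : Matrix (Fin k) (Fin k) Bool) (i : Fin k) (j : Fin r) :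
    border r B (i.addNat r) (j.castLE le_add_self) = true := by
  simpa using border_blockIndex B (.inr i) (.inl j)

@[simp]
lemma border_addNat_addNat (B : Matrix (Fin k) (Fin k) Bool) (i j : Fin k) :
    border r B (i.addNat r) (j.addNat r) = B i j := by
  simpa using border_blockIndex B (.inr i) (.inr j)

lemma deleteLeading_border (r : ℕ) (B : Matrix (Fin k) (Fin k) Bool) :
    deleteLeading r (border r B) = B :=
  Matrix.ext (border_addNat_addNat B)

lemma transpose_border (r : ℕ) (B : Matrix (Fin k) (Fin k) Bool) :
    (border r B).transpose = border r B.transpose := by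
  simp only [border, Matrix.transpose_reindex, Matrix.fromBlocks_transpose]
  rfl

lemma border_deleteLeading (hA : A ∈ Lambda (k + r) k)
    (hzero : ∀ i j : Fin r, A (i.castLE le_add_self) (j.castLE le_add_self) = false) :
    border r (deleteLeading r A) = A := by
  have hrow (i : Fin r) : ∀ j : Fin k, A (i.castLE le_add_self) (j.addNat r) = true :=
    forall_addNat_of_card_eq (hA.1 _) fun j => by simp [hzero]
  have hcol (j : Fin r) : ∀ i : Fin k, A (i.addNat r) (j.castLE le_add_self) = true :=
    forall_addNat_of_card_eq (hA.2 _) fun i => by simp [hzero]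
  refine Matrix.ext ?_
  simp only [forall_castLE_addNat, border_castLE_castLE, border_castLE_addNat,
    border_addNat_castLE, border_addNat_addNat, hzero, hrow, hcol, implies_true, true_and]
  exact fun _ _ => rfl

lemma forall_card_row_border_iff (hr : r ≤ k) :
    (∀ i, Finset.card {j | border r B i j = true} = k) ↔
      ∀ i, Finset.card {j | B i j = true} = k - r := by
  simp only [forall_castLE_addNat (r := r), card_castLE_addNat, border_castLE_castLE,
    border_castLE_addNat, border_addNat_castLE, border_addNat_addNat, Bool.false_eq_true,
    Finset.filter_false, Finset.filter_true, Finset.card_empty, Finset.card_univ, Fintype.card_fin,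
    zero_add, implies_true, true_and]
  exact forall_congr' fun i => by omega

lemma border_mem_Lambda_iff (hr : r ≤ k) :
    border r B ∈ Lambda (k + r) k ↔ B ∈ Lambda k (k - r) := by
  have hcol := forall_card_row_border_iff (B := B.transpose) hr
  rw [← transpose_border] at hcol
  exact and_congr (forall_card_row_border_iff hr) hcol

lemma rowVal_border_castLE (B : Matrix (Fin k) (Fin k) Bool) (i : Fin r) :
    rowVal (border r B) (i.castLE le_add_self) = ∑ j : Fin k, 2 ^ (k - 1 - (j : ℕ)) := by
  have hexp (j : Fin k) : k + r - 1 - (j + r) = k - 1 - j := by omega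
  simp [rowVal, sum_castLE_addNat, hexp]

lemma rowVal_border_addNat (B : Matrix (Fin k) (Fin k) Bool) (i : Fin k) :
    rowVal (border r B) (i.addNat r) =
      ∑ j : Fin r, 2 ^ (k + r - 1 - (j : ℕ)) + rowVal B i := by
  have hexp (j : Fin k) : k + r - 1 - (j + r) = k - 1 - j := by omega
  simp [rowVal, sum_castLE_addNat, hexp]

lemma rowVal_border_castLE_lt_addNat (B : Matrix (Fin k) (Fin k) Bool) (i : Fin r) (i' : Fin k) :
    rowVal (border r B) (i.castLE le_add_self) < rowVal (border r B) (i'.addNat r) := by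
  let first : Fin r := ⟨0, i.pos⟩
  refine rowVal_lt_rowVal_of_first_diff (j := first.castLE le_add_self) ?_
    fun l hl => absurd hl (Nat.not_lt_zero l)
  simp only [border_castLE_castLE, border_addNat_castLE, Bool.false_lt_true]

lemma monotone_rowVal_border_iff : Monotone (rowVal (border r B)) ↔ Monotone (rowVal B) := by
  have htail (i i' : Fin k) :
      rowVal (border r B) (i.addNat r) ≤ rowVal (border r B) (i'.addNat r) ↔
        rowVal B i ≤ rowVal B i' := by
    rw [rowVal_border_addNat, rowVal_border_addNat, add_le_add_iff_left]
  constructor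
  · exact fun h i i' hi => (htail i i').mp (h ((Fin.addNat_le_addNat_iff r).mpr hi))
  · intro h
    simp only [Monotone, forall_castLE_addNat (r := r)]
    refine ⟨fun i => ⟨fun i' _ => ?_, fun i' _ => ?_⟩, fun i => ⟨fun i' hi => ?_, fun i' hi => ?_⟩⟩
    · rw [rowVal_border_castLE, rowVal_border_castLE]
    · exact (rowVal_border_castLE_lt_addNat B i i').le
    · have hi : (i : ℕ) + r ≤ i' := hi
      omega
    · exact (htail i i').mpr (h ((Fin.addNat_le_addNat_iff r).mp hi))

lemma isCanonical_border_iff : IsCanonical (border r B) ↔ IsCanonical B := by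
  rw [IsCanonical, transpose_border, monotone_rowVal_border_iff, monotone_rowVal_border_iff,
    IsCanonical]

end Border

/-- The canonical matrices in `Λ_{k+r}^k` whose leading `r × r` block is zero: the domain of the
bijection for general `r`, in place of the condition `α_{2,2} = 0` on a single entry. -/
def canonicalZeroBlock (r k : ℕ) : Set (Matrix (Fin (k + r)) (Fin (k + r)) Bool) :=
  {A | A ∈ Lambda (k + r) k ∧ IsCanonical A ∧
    ∀ i j : Fin r, A (i.castLE le_add_self) (j.castLE le_add_self) = false}

lemma forall_leadingBlock_eq_false_iff {k : ℕ} {A : Matrix (Fin (k + 2)) (Fin (k + 2)) Bool}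
    (hA : A ∈ Lambda (k + 2) k) (hc : IsCanonical A) :
    (∀ i j : Fin 2, A (i.castLE le_add_self) (j.castLE le_add_self) = false) ↔
      A 1 1 = false := by
  have hrow (j : Fin 2) : A 0 (j.castLE le_add_self) = false :=
    eq_false_of_monotone_of_card_lt (monotone_firstRow hc.2) <|
      (hA.1 0).symm ▸ Nat.add_lt_add_left j.isLt k
  have hcol (i : Fin 2) : A (i.castLE le_add_self) 0 = false :=
    eq_false_of_monotone_of_card_lt (monotone_firstRow (A := A.transpose) hc.1) <|
      (hA.2 0).symm ▸ Nat.add_lt_add_left i.isLt k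
  rw [Fin.forall_fin_two, Fin.forall_fin_two, Fin.forall_fin_two]
  exact ⟨fun h => h.2.2, fun h => ⟨⟨hrow 0, hrow 1⟩, hcol 1, h⟩⟩

lemma canonicalZeroBlock_two (k : ℕ) :
    canonicalZeroBlock 2 k = {A | A ∈ Lambda (k + 2) k ∧ IsCanonical A ∧ A 1 1 = false} :=
  Set.ext fun _ => and_congr_right fun hA => and_congr_right fun hc =>
    forall_leadingBlock_eq_false_iff hA hc

theorem bij_case_alpha22_zero_general {r k : ℕ} (hr : r ≤ k) :
    Set.BijOn (deleteLeading r) (canonicalZeroBlock r k)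
      {B | B ∈ Lambda k (k - r) ∧ IsCanonical B} ∧
    Nat.card (canonicalZeroBlock r k) =
      Nat.card {B : Matrix (Fin k) (Fin k) Bool | B ∈ Lambda k (k - r) ∧ IsCanonical B} := by
  have hleft : Set.LeftInvOn (border r) (deleteLeading r) (canonicalZeroBlock r k) :=
    fun _ ⟨hA, _, hzero⟩ => border_deleteLeading hA hzero
  have hborder (B : Matrix (Fin k) (Fin k) Bool) :
      border r B ∈ canonicalZeroBlock r k ↔ B ∈ Lambda k (k - r) ∧ IsCanonical B := by
    simp only [canonicalZeroBlock, Set.mem_ofPred_eq, border_mem_Lambda_iff hr,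
      isCanonical_border_iff, border_castLE_castLE, implies_true, and_true]
  have hbij : Set.BijOn (deleteLeading r) (canonicalZeroBlock r k)
      {B | B ∈ Lambda k (k - r) ∧ IsCanonical B} :=
    Set.InvOn.bijOn ⟨hleft, fun B _ => deleteLeading_border r B⟩
      (fun A hA => (hborder _).mp ((hleft hA).symm ▸ hA)) fun B hB => (hborder B).mpr hB
  exact ⟨hbij, Nat.card_congr (hbij.equiv _)⟩

theorem bij_case_alpha22_zero (k : ℕ) (hk : 3 ≤ k) :
    Set.BijOn
      (fun A : Matrix (Fin (k + 2)) (Fin (k + 2)) Bool =>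
        Matrix.of fun i j : Fin k => A (i.addNat 2) (j.addNat 2))
      {A | A ∈ Lambda (k + 2) k ∧ IsCanonical A ∧ A 1 1 = false}
      {B | B ∈ Lambda k (k - 2) ∧ IsCanonical B} ∧
    Nat.card {A : Matrix (Fin (k + 2)) (Fin (k + 2)) Bool |
        A ∈ Lambda (k + 2) k ∧ IsCanonical A ∧ A 1 1 = false} =
      Nat.card {B : Matrix (Fin k) (Fin k) Bool |
        B ∈ Lambda k (k - 2) ∧ IsCanonical B} := by
  rw [← canonicalZeroBlock_two]
  exact bij_case_alpha22_zero_general (Nat.le_of_succ_le hk)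
end

section
/- Let k ≥ 3 be an integer. The number of canonical matrices A = (α_{ij}) ∈ Λ_{k+2}^k with α_{2,2} = 1 equals the number of canonical matrices in Λ_{k+1}^{k−1}; a bijection is given by changing the entry α_{2,2} from 1 to 0 and then deleting the first row and the first column of A. -/
/-!
If `A` in `Λ_{k+2}^k` is canonical, its first row and first column are both `0 0 1 ⋯ 1`. Once they
are deleted, every remaining row and column but the first has lost exactly one `1`, and the first
loses one by clearing the corner entry.

Canonicity survives in both directions because a nondecreasing bit vector has the least value among
all vectors with at least as many ones. Hence, for a matrix with constant line sums and a `0` in the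
corner, sorting the rows and columns other than the first ones already forces canonicity. The second
row of `A` starts with `0` and the later ones with `1`, so its place is automatic too, and deleting
the common leading digit `1` of the later rows does not affect their order.
-/

section BinaryValue

open scoped Finset

variable {n : ℕ} {v w : Fin n → Bool}

/-- The natural number with binary digits `v`, most significant digit first, so that
`rowVal A i = binaryValue (A i)` holds definitionally. -/
def binaryValue (v : Fin n → Bool) : ℕ :=
  ∑ j : Fin n, if v j = true then 2 ^ (n - 1 - (j : ℕ)) else 0

lemma binaryValue_eq_head_add_tail (v : Fin (n + 1) → Bool) :
    binaryValue v = (if v 0 = true then 2 ^ n else 0) + binaryValue (Fin.tail v) := by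
  have exponent (j : Fin n) : n - (j.succ : ℕ) = n - 1 - (j : ℕ) := by
    rw [Fin.val_succ]
    omega
  simp only [binaryValue, Fin.sum_univ_succ, exponent, Fin.val_zero, Nat.add_sub_cancel,
    Nat.sub_zero]
  rfl

lemma binaryValue_lt_two_pow (v : Fin n → Bool) : binaryValue v < 2 ^ n := by
  induction n with
  | zero => simp [binaryValue]
  | succ n ih =>
    have := ih (Fin.tail v)
    rw [binaryValue_eq_head_add_tail, pow_succ]
    split_ifs <;> omega

lemma binaryValue_lt_of_head_lt {v w : Fin (n + 1) → Bool} (h : v 0 < w 0) :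
    binaryValue v < binaryValue w := by
  obtain ⟨hv, hw⟩ := Bool.lt_iff.1 h
  calc binaryValue v = binaryValue (Fin.tail v) := by
        simp [binaryValue_eq_head_add_tail v, hv]
    _ < 2 ^ n := binaryValue_lt_two_pow _
    _ ≤ binaryValue w := by simp [binaryValue_eq_head_add_tail w, hw]

lemma head_le_of_binaryValue_le {v w : Fin (n + 1) → Bool} (h : binaryValue v ≤ binaryValue w) :
    v 0 ≤ w 0 :=
  le_of_not_gt fun hlt => (binaryValue_lt_of_head_lt hlt).not_ge h

lemma binaryValue_le_of_monotone_of_card_le (hv : Monotone v)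
    (hcard : #{j | v j = true} ≤ #{j | w j = true}) : binaryValue v ≤ binaryValue w := by
  induction n with
  | zero => simp [binaryValue]
  | succ n ih =>
    rcases lt_trichotomy (v 0) (w 0) with hlt | heq | hgt
    · exact (binaryValue_lt_of_head_lt hlt).le
    · have htail : binaryValue (Fin.tail v) ≤ binaryValue (Fin.tail w) := by
        refine ih (hv.comp Fin.strictMono_succ.monotone) ?_
        rw [Fin.card_filter_univ_succ, Fin.card_filter_univ_succ, heq] at hcard
        split_ifs at hcard
        exacts [Nat.le_of_succ_le_succ hcard, hcard]
      simpa [binaryValue_eq_head_add_tail, heq] using htail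
    · obtain ⟨hw, hv₀⟩ := Bool.lt_iff.1 hgt
      have hv_card : #{j | v j = true} = n + 1 := by
        simp [fun j => Bool.eq_true_of_true_le (hv₀ ▸ hv (Fin.zero_le j))]
      have hw_card : #{j | w j = true} < n + 1 := by
        simpa using Finset.card_lt_univ_of_notMem (s := {j | w j = true}) (x := 0) (by simp [hw])
      omega

lemma apply_eq_true_iff_of_monotone (hv : Monotone v) (j : Fin n) :
    v j = true ↔ n ≤ j + #{i | v i = true} := by
  constructor
  · intro hj
    have : Finset.Ici j ⊆ ({i | v i = true} : Finset (Fin n)) := fun i hi => by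
      simpa using Bool.eq_true_of_true_le (hj ▸ hv (Finset.mem_Ici.1 hi))
    have := Finset.card_le_card this
    rw [Fin.card_Ici] at this
    omega
  · contrapose!
    intro hj
    have : ({i | v i = true} : Finset (Fin n)) ⊆ Finset.Ioi j := fun i hi => by
      rw [Finset.mem_Ioi]
      exact hv.reflect_lt (Bool.lt_iff.2 ⟨by simpa using hj, by simpa using hi⟩)
    have := Finset.card_le_card this
    rw [Fin.card_Ioi] at this
    omega

end BinaryValue

section Canonical

variable {n k : ℕ}

lemma monotone_iff_monotone_succ {α : Type*} [Preorder α] {f : Fin (n + 1) → α}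
    (hf : ∀ i, f 0 ≤ f i) : Monotone f ↔ Monotone fun i : Fin n => f i.succ := by
  refine ⟨fun h => h.comp Fin.strictMono_succ.monotone, fun h i j hij => ?_⟩
  cases i using Fin.cases with
  | zero => exact hf j
  | succ i =>
    cases j using Fin.cases with
    | zero => exact absurd hij (by simp)
    | succ j => exact h (Fin.succ_le_succ_iff.1 hij)

lemma transpose_mem_lambda {A : Matrix (Fin n) (Fin n) Bool} (hA : A ∈ Lambda n k) :
    A.transpose ∈ Lambda n k :=
  ⟨hA.2, hA.1⟩

lemma IsCanonical.transpose {A : Matrix (Fin n) (Fin n) Bool} (hA : IsCanonical A) :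
    IsCanonical A.transpose :=
  ⟨hA.2, hA.1⟩

variable {A : Matrix (Fin (n + 1)) (Fin (n + 1)) Bool}

lemma IsCanonical.monotone_zero (hA : IsCanonical A) : Monotone (A 0) :=
  fun _ _ hij => head_le_of_binaryValue_le (hA.2 hij)

lemma IsCanonical.apply_zero_eq_true_iff (hA : IsCanonical A) (hmem : A ∈ Lambda (n + 1) k)
    (j : Fin (n + 1)) : A 0 j = true ↔ n + 1 ≤ j + k := by
  rw [apply_eq_true_iff_of_monotone hA.monotone_zero, hmem.1]

lemma monotone_rowVal_of_monotone_succ (hmem : A ∈ Lambda (n + 1) k) (h₀ : A 0 0 = false)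
    (hrow : Monotone fun i : Fin n => rowVal A i.succ)
    (hcol : Monotone fun j : Fin n => rowVal A.transpose j.succ) : Monotone (rowVal A) := by
  have hzero : Monotone (A 0) := (monotone_iff_monotone_succ (by simp [h₀])).2
    fun _ _ hij => head_le_of_binaryValue_le (hcol hij)
  have hleast (i : Fin (n + 1)) : rowVal A 0 ≤ rowVal A i :=
    binaryValue_le_of_monotone_of_card_le hzero ((hmem.1 0).trans (hmem.1 i).symm).le
  exact (monotone_iff_monotone_succ hleast).2 hrow

lemma isCanonical_iff_monotone_succ (hmem : A ∈ Lambda (n + 1) k) (h₀ : A 0 0 = false) :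
    IsCanonical A ↔ Monotone (fun i : Fin n => rowVal A i.succ) ∧
      Monotone fun j : Fin n => rowVal A.transpose j.succ := by
  have hsucc := (Fin.strictMono_succ (n := n)).monotone
  exact ⟨fun h => ⟨h.1.comp hsucc, h.2.comp hsucc⟩, fun ⟨hrow, hcol⟩ =>
    ⟨monotone_rowVal_of_monotone_succ hmem h₀ hrow hcol,
      monotone_rowVal_of_monotone_succ (transpose_mem_lambda hmem) h₀ hcol hrow⟩⟩

end Canonical

section Border

open scoped Finset

variable {n : ℕ} {A : Matrix (Fin (n + 2)) (Fin (n + 2)) Bool}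
  {B : Matrix (Fin (n + 1)) (Fin (n + 1)) Bool}

/-- Clears the entry `α₂₂`, which is `A 1 1` in zero-based indices, and deletes the first row and
the first column. -/
def stripBorder (A : Matrix (Fin (n + 2)) (Fin (n + 2)) Bool) :
    Matrix (Fin (n + 1)) (Fin (n + 1)) Bool :=
  Matrix.of fun i j => if i = 0 ∧ j = 0 then false else A i.succ j.succ

/-- Prepends the row and the column `0 0 1 ⋯ 1` to `B` and replaces the old corner entry by `1`;
inverse to `stripBorder` on the canonical matrices of the theorem. -/
def addBorder (B : Matrix (Fin (n + 1)) (Fin (n + 1)) Bool) :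
    Matrix (Fin (n + 2)) (Fin (n + 2)) Bool :=
  Matrix.of <| Fin.cons (Fin.cons false fun j => decide (j ≠ 0)) fun i =>
    Fin.cons (decide (i ≠ 0)) fun j => if i = 0 ∧ j = 0 then true else B i j

lemma addBorder_transpose (B : Matrix (Fin (n + 1)) (Fin (n + 1)) Bool) :
    addBorder B.transpose = (addBorder B).transpose := by
  ext i j
  cases i using Fin.cases <;> cases j using Fin.cases <;> simp [addBorder, Bool.and_comm]

lemma stripBorder_addBorder (h₀ : B 0 0 = false) : stripBorder (addBorder B) = B := by
  ext i j
  by_cases hij : i = 0 ∧ j = 0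
  · simp [stripBorder, hij, h₀]
  · simp only [stripBorder, addBorder, Matrix.of_apply, Fin.cons_succ, if_neg hij]

lemma addBorder_stripBorder (hmem : A ∈ Lambda (n + 2) n) (hA : IsCanonical A)
    (h₁ : A 1 1 = true) : addBorder (stripBorder A) = A := by
  have hrow (j) : A 0 j = true ↔ 2 ≤ (j : ℕ) := by
    rw [hA.apply_zero_eq_true_iff hmem]
    omega
  have hcol (i) : A i 0 = true ↔ 2 ≤ (i : ℕ) := by
    rw [← A.transpose_apply, hA.transpose.apply_zero_eq_true_iff (transpose_mem_lambda hmem)]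
    omega
  ext i j
  rw [Bool.eq_iff_iff]
  cases i using Fin.cases with
  | zero => cases j using Fin.cases <;> simp [addBorder, hrow, Nat.one_le_iff_ne_zero]
  | succ i =>
    cases j using Fin.cases with
    | zero => simp [addBorder, hcol, Nat.one_le_iff_ne_zero]
    | succ j =>
      by_cases hij : i = 0 ∧ j = 0
      · simp [addBorder, hij, h₁]
      · simp only [addBorder, stripBorder, Matrix.of_apply, Fin.cons_succ, if_neg hij]

lemma card_addBorder_zero (B : Matrix (Fin (n + 1)) (Fin (n + 1)) Bool) :
    #{j | addBorder B 0 j = true} = n := by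
  simp [Fin.card_filter_univ_succ, addBorder]

lemma card_addBorder_succ (h₀ : B 0 0 = false) (i : Fin (n + 1)) :
    #{j | addBorder B i.succ j = true} = #{j | B i j = true} + 1 := by
  by_cases hi : i = 0
  · simp [Fin.card_filter_univ_succ, addBorder, hi, h₀]
  · simp [Fin.card_filter_univ_succ, addBorder, hi]

lemma forall_card_addBorder_iff (h₀ : B 0 0 = false) (hn : 1 ≤ n) :
    (∀ i, #{j | addBorder B i j = true} = n) ↔ ∀ i, #{j | B i j = true} = n - 1 := by
  simp only [Fin.forall_fin_succ (n := n + 1), card_addBorder_zero, card_addBorder_succ h₀,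
    true_and, eq_tsub_iff_add_eq_of_le hn]

lemma addBorder_mem_lambda_iff (h₀ : B 0 0 = false) (hn : 1 ≤ n) :
    addBorder B ∈ Lambda (n + 2) n ↔ B ∈ Lambda (n + 1) (n - 1) := by
  have hcol := forall_card_addBorder_iff (B := B.transpose) h₀ hn
  rw [addBorder_transpose] at hcol
  exact and_congr (forall_card_addBorder_iff h₀ hn) hcol

lemma rowVal_addBorder_succ_succ (B : Matrix (Fin (n + 1)) (Fin (n + 1)) Bool) (i : Fin n) :
    rowVal (addBorder B) i.succ.succ = 2 ^ (n + 1) + rowVal B i.succ := by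
  have htail : Fin.tail (addBorder B i.succ.succ) = B i.succ := by
    ext j
    simp [addBorder, Fin.tail]
  change binaryValue (addBorder B i.succ.succ) = 2 ^ (n + 1) + binaryValue (B i.succ)
  rw [binaryValue_eq_head_add_tail, htail]
  simp [addBorder]

lemma monotone_rowVal_addBorder_succ_iff (B : Matrix (Fin (n + 1)) (Fin (n + 1)) Bool) :
    (Monotone fun i : Fin (n + 1) => rowVal (addBorder B) i.succ) ↔
      Monotone fun i : Fin n => rowVal B i.succ := by
  have hleast (i : Fin (n + 1)) : rowVal (addBorder B) (Fin.succ 0) ≤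
      rowVal (addBorder B) i.succ := by
    cases i using Fin.cases with
    | zero => rfl
    | succ i => exact (binaryValue_lt_of_head_lt (by simp [addBorder])).le
  rw [monotone_iff_monotone_succ hleast]
  simp only [rowVal_addBorder_succ_succ, Monotone, add_le_add_iff_left]

lemma isCanonical_addBorder_iff (h₀ : B 0 0 = false) (hn : 1 ≤ n)
    (hmem : B ∈ Lambda (n + 1) (n - 1)) : IsCanonical (addBorder B) ↔ IsCanonical B := by
  rw [isCanonical_iff_monotone_succ ((addBorder_mem_lambda_iff h₀ hn).2 hmem) rfl,
    isCanonical_iff_monotone_succ hmem h₀, ← addBorder_transpose,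
    monotone_rowVal_addBorder_succ_iff, monotone_rowVal_addBorder_succ_iff]

end Border

theorem bij_case_alpha22_one_general (k : ℕ) (hk : 1 ≤ k) :
    Set.BijOn stripBorder
      {A : Matrix (Fin (k + 2)) (Fin (k + 2)) Bool |
        A ∈ Lambda (k + 2) k ∧ IsCanonical A ∧ A 1 1 = true}
      {B | B ∈ Lambda (k + 1) (k - 1) ∧ IsCanonical B} := by
  have corner {B : Matrix (Fin (k + 1)) (Fin (k + 1)) Bool}
      (hmem : B ∈ Lambda (k + 1) (k - 1)) (hB : IsCanonical B) : B 0 0 = false := by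
    rw [← Bool.not_eq_true, hB.apply_zero_eq_true_iff hmem, Fin.val_zero]
    omega
  refine Set.InvOn.bijOn (f' := addBorder) ⟨?_, ?_⟩ ?_ ?_
  · exact fun A ⟨hmem, hA, h₁⟩ => addBorder_stripBorder hmem hA h₁
  · exact fun B ⟨hmem, hB⟩ => stripBorder_addBorder (corner hmem hB)
  · rintro A ⟨hmem, hA, h₁⟩
    have hA_eq := addBorder_stripBorder hmem hA h₁
    have hstrip := (addBorder_mem_lambda_iff rfl hk).1 (hA_eq.symm ▸ hmem)
    exact ⟨hstrip, (isCanonical_addBorder_iff rfl hk hstrip).1 (hA_eq.symm ▸ hA)⟩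
  · rintro B ⟨hmem, hB⟩
    have h₀ := corner hmem hB
    exact ⟨(addBorder_mem_lambda_iff h₀ hk).2 hmem,
      (isCanonical_addBorder_iff h₀ hk hmem).2 hB, rfl⟩

theorem bij_case_alpha22_one (k : ℕ) (hk : 3 ≤ k) :
    Set.BijOn
      (fun A : Matrix (Fin (k + 2)) (Fin (k + 2)) Bool =>
        Matrix.of fun i j : Fin (k + 1) =>
          if i = 0 ∧ j = 0 then false else A i.succ j.succ)
      {A | A ∈ Lambda (k + 2) k ∧ IsCanonical A ∧ A 1 1 = true}
      {B | B ∈ Lambda (k + 1) (k - 1) ∧ IsCanonical B} ∧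
    Nat.card {A : Matrix (Fin (k + 2)) (Fin (k + 2)) Bool |
        A ∈ Lambda (k + 2) k ∧ IsCanonical A ∧ A 1 1 = true} =
      Nat.card {B : Matrix (Fin (k + 1)) (Fin (k + 1)) Bool |
        B ∈ Lambda (k + 1) (k - 1) ∧ IsCanonical B} := by
  have hbij := bij_case_alpha22_one_general k (by omega)
  exact ⟨hbij, Nat.card_congr (hbij.equiv _)⟩
end

section
/- Let C(n,k) denote the number of canonical matrices in Λ_n^k. Then for every integer k ≥ 3, C(k+2, k) = C(k, k−2) + C(k+1, k−1). -/
/-- `C n k` : the number of canonical matrices in `Λ_n^k`. -/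
noncomputable def C (n k : ℕ) : ℕ :=
  Nat.card {A : Matrix (Fin n) (Fin n) Bool | A ∈ Lambda n k ∧ IsCanonical A}

/-!
Complementing, the matrices in `Λ_{k+2}^k` are those with exactly two zeros in each row and column.
When such a matrix is canonical, its first row and first column are sorted, hence equal to
`0 0 1 ⋯ 1`, so everything is determined by the minor `M` obtained by deleting them.
If `M` has corner `0`, the matrix starts with a `2 × 2` zero block, and deleting two rows and two
columns leaves an arbitrary canonical matrix of the same kind. If `M` has corner `1`, changing that
corner to `0` turns `M` into an arbitrary canonical matrix of the same kind.
-/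

namespace CanonicalCount

open scoped Matrix

section BinaryVectors

variable {n : ℕ}

/-- The number with binary digits `v`, most significant digit first, so that
`rowVal A i = binVal (A i)` definitionally. -/
def binVal (v : Fin n → Bool) : ℕ :=
  ∑ j : Fin n, if v j = true then 2 ^ (n - 1 - (j : ℕ)) else 0

/-- The number of zeros of a binary vector. -/
def zeroCount (v : Fin n → Bool) : ℕ :=
  (Finset.univ.filter fun j => v j = false).card

lemma binVal_cons (a : Bool) (v : Fin n → Bool) :
    binVal (Fin.cons a v : Fin (n + 1) → Bool) = (if a = true then 2 ^ n else 0) + binVal v := by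
  simp only [binVal, Fin.sum_univ_succ, Fin.cons_zero, Fin.cons_succ, Fin.val_zero, Fin.val_succ,
    Nat.add_sub_cancel, Nat.sub_zero, Nat.sub_sub, add_comm]

lemma binVal_lt_two_pow : ∀ {n : ℕ} (v : Fin n → Bool), binVal v < 2 ^ n
  | 0, _ => by simp [binVal]
  | n + 1, v => by
    have := binVal_lt_two_pow (Fin.tail v)
    rw [← Fin.cons_self_tail v, binVal_cons, pow_succ]
    split_ifs <;> omega

lemma binVal_cons_le_cons_iff {a b : Bool} {v w : Fin n → Bool} :
    binVal (Fin.cons a v : Fin (n + 1) → Bool) ≤ binVal (Fin.cons b w : Fin (n + 1) → Bool) ↔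
      a < b ∨ a = b ∧ binVal v ≤ binVal w := by
  have hv := binVal_lt_two_pow v
  have hw := binVal_lt_two_pow w
  rw [binVal_cons, binVal_cons]
  cases a <;> cases b <;> simp [Bool.lt_iff] <;> omega

lemma apply_zero_le_of_binVal_le {v w : Fin (n + 1) → Bool} (h : binVal v ≤ binVal w) :
    v 0 ≤ w 0 := by
  rw [← Fin.cons_self_tail v, ← Fin.cons_self_tail w, binVal_cons_le_cons_iff] at h
  exact h.elim le_of_lt fun h => h.1.le

lemma zeroCount_cons (a : Bool) (v : Fin n → Bool) :
    zeroCount (Fin.cons a v : Fin (n + 1) → Bool) = (if a = false then 1 else 0) + zeroCount v := by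
  simp only [zeroCount, Fin.card_filter_univ_succ, Fin.cons_zero, Fin.cons_succ]
  split_ifs <;> simp [add_comm]

lemma zeroCount_eq_zero_iff {v : Fin n → Bool} : zeroCount v = 0 ↔ v = ⊤ := by
  simp [zeroCount, Finset.filter_eq_empty_iff, funext_iff]

lemma zeroCount_top : zeroCount (⊤ : Fin n → Bool) = 0 :=
  zeroCount_eq_zero_iff.2 rfl

lemma card_filter_true_eq_iff {k z : ℕ} (v : Fin (k + z) → Bool) :
    (Finset.univ.filter fun j => v j = true).card = k ↔ zeroCount v = z := by
  have := Finset.card_filter_add_card_filter_not (s := Finset.univ) fun j => v j = true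
  simp only [Finset.card_univ, Fintype.card_fin, Bool.not_eq_true] at this
  unfold zeroCount
  omega

lemma monotone_fin_succ_iff {α : Type*} [Preorder α] {f : Fin (n + 1) → α} :
    Monotone f ↔ (∀ i : Fin n, f 0 ≤ f i.succ) ∧ Monotone (Fin.tail f) := by
  simp [Monotone, Fin.forall_fin_succ, Fin.tail]

lemma monotone_cons_false_iff {v : Fin n → Bool} :
    Monotone (Fin.cons false v : Fin (n + 1) → Bool) ↔ Monotone v := by
  simp [monotone_fin_succ_iff]

lemma monotone_cons_true_iff {v : Fin n → Bool} :
    Monotone (Fin.cons true v : Fin (n + 1) → Bool) ↔ v = ⊤ := by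
  simp only [monotone_fin_succ_iff, Fin.cons_zero, Fin.cons_succ, Fin.tail_cons]
  exact ⟨fun h => funext fun i => top_le_iff.1 (h.1 i),
    fun h => h ▸ ⟨fun _ => le_rfl, monotone_const⟩⟩

lemma binVal_le_of_monotone {v w : Fin n → Bool} (hv : Monotone v)
    (h : zeroCount w ≤ zeroCount v) : binVal v ≤ binVal w := by
  induction n with
  | zero => simp [binVal]
  | succ n ih =>
    cases v using Fin.consCases with | _ a v
    cases w using Fin.consCases with | _ b w
    rw [zeroCount_cons, zeroCount_cons] at h
    rw [binVal_cons_le_cons_iff]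
    cases a
    · rw [monotone_cons_false_iff] at hv
      cases b
      · exact Or.inr ⟨rfl, ih hv (by simpa using h)⟩
      · exact Or.inl Bool.false_lt_true
    · obtain rfl := monotone_cons_true_iff.1 hv
      cases b
      · simp [zeroCount_top] at h
      · exact Or.inr ⟨rfl, ih monotone_const (by simpa using h)⟩

lemma exists_eq_cons_false_of_monotone {z : ℕ} {v : Fin (n + 1) → Bool} (hv : Monotone v)
    (h : zeroCount v = z + 1) :
    ∃ w : Fin n → Bool, v = Fin.cons false w ∧ Monotone w ∧ zeroCount w = z := by
  cases v using Fin.consCases with | _ a v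
  rw [zeroCount_cons] at h
  cases a
  · exact ⟨v, rfl, monotone_cons_false_iff.1 hv, by simpa [add_comm] using h⟩
  · simp [monotone_cons_true_iff.1 hv, zeroCount_top] at h

end BinaryVectors

section BorderedMatrices

variable {α : Type*} {m n : ℕ}

/-- The matrix with corner `a`, rest of the first row `r`, rest of the first column `c`,
and complementary minor `B`. -/
def border (a : α) (r : Fin n → α) (c : Fin m → α) (B : Matrix (Fin m) (Fin n) α) :
    Matrix (Fin (m + 1)) (Fin (n + 1)) α :=
  Fin.cons (Fin.cons a r) fun i => Fin.cons (c i) (B i)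

/-- The matrix obtained by deleting the first row and the first column. -/
def minor (A : Matrix (Fin (m + 1)) (Fin (n + 1)) α) : Matrix (Fin m) (Fin n) α :=
  A.submatrix Fin.succ Fin.succ

lemma border_zero (a : α) (r : Fin n → α) (c : Fin m → α) (B : Matrix (Fin m) (Fin n) α) :
    border a r c B 0 = Fin.cons a r := rfl

lemma border_succ (a : α) (r : Fin n → α) (c : Fin m → α) (B : Matrix (Fin m) (Fin n) α)
    (i : Fin m) : border a r c B i.succ = Fin.cons (c i) (B i) := rfl

lemma border_minor (A : Matrix (Fin (m + 1)) (Fin (n + 1)) α) :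
    border (A 0 0) (Fin.tail (A 0)) (Fin.tail (Aᵀ 0)) (minor A) = A := by
  ext i j
  cases i using Fin.cases <;> cases j using Fin.cases <;> rfl

lemma transpose_border (a : α) (r : Fin n → α) (c : Fin m → α) (B : Matrix (Fin m) (Fin n) α) :
    (border a r c B)ᵀ = border a c r Bᵀ := by
  ext i j
  cases i using Fin.cases <;> cases j using Fin.cases <;> rfl

/-- The matrix with first row and column `0 0 1 ⋯ 1` and complementary minor `M`. -/
def extend (M : Matrix (Fin (n + 1)) (Fin (n + 1)) Bool) :
    Matrix (Fin (n + 2)) (Fin (n + 2)) Bool :=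
  border false (Fin.cons false ⊤) (Fin.cons false ⊤) M

/-- The block matrix whose diagonal blocks are the `2 × 2` zero matrix and `B`, and whose other
entries are `1`. -/
def addBlock (B : Matrix (Fin n) (Fin n) Bool) : Matrix (Fin (n + 2)) (Fin (n + 2)) Bool :=
  extend (border false ⊤ ⊤ B)

/-- The matrix obtained by negating the entry in the upper left corner. -/
def flipCorner (B : Matrix (Fin (n + 1)) (Fin (n + 1)) Bool) :
    Matrix (Fin (n + 1)) (Fin (n + 1)) Bool :=
  border (!B 0 0) (Fin.tail (B 0)) (Fin.tail (Bᵀ 0)) (minor B)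

/-- `B` with its corner negated, extended by a first row and a first column `0 0 1 ⋯ 1`. If `B` has
corner `0`, the new column and row restore the zero lost by the first row and column of `B`. -/
def growBlock (B : Matrix (Fin (n + 1)) (Fin (n + 1)) Bool) :
    Matrix (Fin (n + 2)) (Fin (n + 2)) Bool :=
  extend (flipCorner B)

lemma extend_injective : Function.Injective (extend (n := n)) :=
  Function.LeftInverse.injective (g := minor) fun _ => rfl

lemma addBlock_injective : Function.Injective (addBlock (n := n)) :=
  extend_injective.comp (Function.LeftInverse.injective (g := minor) fun _ => rfl)

lemma flipCorner_involutive : Function.Involutive (flipCorner (n := n)) := fun B => by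
  conv_rhs => rw [← border_minor B, ← Bool.not_not (B 0 0)]
  rfl

lemma growBlock_injective : Function.Injective (growBlock (n := n)) :=
  extend_injective.comp flipCorner_involutive.injective

lemma transpose_extend (M : Matrix (Fin (n + 1)) (Fin (n + 1)) Bool) :
    (extend M)ᵀ = extend Mᵀ :=
  transpose_border ..

lemma transpose_addBlock (B : Matrix (Fin n) (Fin n) Bool) : (addBlock B)ᵀ = addBlock Bᵀ := by
  rw [addBlock, transpose_extend, transpose_border, addBlock]

lemma transpose_growBlock (B : Matrix (Fin (n + 1)) (Fin (n + 1)) Bool) :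
    (growBlock B)ᵀ = growBlock Bᵀ :=
  (transpose_extend _).trans (congrArg extend (transpose_border ..))

end BorderedMatrices

section TwoZeros

variable {n : ℕ}

/-- Each row of `A` has exactly two zeros and the rows are sorted by the number they represent;
half of `TwoZeroCanonical`. -/
def TwoZeroSortedRows (A : Matrix (Fin n) (Fin n) Bool) : Prop :=
  (∀ i, zeroCount (A i) = 2) ∧ Monotone fun i => binVal (A i)

/-- `A` is a canonical matrix with exactly two zeros in each row and each column. -/
def TwoZeroCanonical (A : Matrix (Fin n) (Fin n) Bool) : Prop :=
  TwoZeroSortedRows A ∧ TwoZeroSortedRows Aᵀ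

lemma C_add_two (n : ℕ) :
    C (n + 2) n = {A : Matrix (Fin (n + 2)) (Fin (n + 2)) Bool | TwoZeroCanonical A}.ncard := by
  have mem_iff (A : Matrix (Fin (n + 2)) (Fin (n + 2)) Bool) :
      A ∈ Lambda (n + 2) n ∧ IsCanonical A ↔ TwoZeroCanonical A := by
    simp only [Lambda, Set.mem_ofPred_eq, card_filter_true_eq_iff]
    exact and_and_and_comm
  simp only [C, mem_iff]
  rfl

lemma TwoZeroCanonical.transpose {A : Matrix (Fin n) (Fin n) Bool} (h : TwoZeroCanonical A) :
    TwoZeroCanonical Aᵀ :=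
  ⟨h.2, h.1⟩

lemma twoZeroSortedRows_iff_of_monotone {A : Matrix (Fin (n + 1)) (Fin (n + 1)) Bool}
    (h : Monotone (A 0)) :
    TwoZeroSortedRows A ↔
      (∀ i, zeroCount (A i) = 2) ∧ Monotone fun i : Fin n => binVal (A i.succ) := by
  refine and_congr_right fun hz => monotone_fin_succ_iff.trans (and_iff_right fun i => ?_)
  exact binVal_le_of_monotone h (by rw [hz, hz])

lemma monotone_row_of_monotone_binVal {ι : Type*} [Preorder ι] {A : Matrix (Fin (n + 1)) ι Bool}
    (h : Monotone fun j => binVal (Aᵀ j)) : Monotone (A 0) :=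
  fun _ _ hij => apply_zero_le_of_binVal_le (h hij)

lemma twoZeroCanonical_iff_of_apply_zero_zero {B : Matrix (Fin (n + 1)) (Fin (n + 1)) Bool}
    (h : B 0 0 = false) :
    TwoZeroCanonical B ↔
      ((∀ i, zeroCount (B i) = 2) ∧ Monotone fun i : Fin n => binVal (B i.succ)) ∧
      ((∀ j, zeroCount (Bᵀ j) = 2) ∧ Monotone fun j : Fin n => binVal (Bᵀ j.succ)) := by
  have monotone_row {B : Matrix (Fin (n + 1)) (Fin (n + 1)) Bool} (h : B 0 0 = false)
      (hB : Monotone fun j : Fin n => binVal (Bᵀ j.succ)) : Monotone (B 0) := by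
    rw [← Fin.cons_self_tail (B 0), h, monotone_cons_false_iff]
    exact monotone_row_of_monotone_binVal (A := B.submatrix id Fin.succ) hB
  constructor
  · rintro ⟨⟨hr, hr'⟩, hc, hc'⟩
    exact ⟨⟨hr, (monotone_fin_succ_iff.1 hr').2⟩, hc, (monotone_fin_succ_iff.1 hc').2⟩
  · rintro ⟨hr, hc⟩
    exact ⟨(twoZeroSortedRows_iff_of_monotone (monotone_row h hc.2)).2 hr,
      (twoZeroSortedRows_iff_of_monotone (monotone_row (B := Bᵀ) h hr.2)).2 hc⟩

lemma twoZeroSortedRows_extend_iff {M : Matrix (Fin (n + 1)) (Fin (n + 1)) Bool} :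
    TwoZeroSortedRows (extend M) ↔ zeroCount (M 0) = 1 ∧ (∀ i : Fin n, zeroCount (M i.succ) = 2) ∧
      Monotone fun i : Fin n => binVal (M i.succ) := by
  have monotone_row : Monotone (extend M 0) :=
    monotone_cons_false_iff.2 (monotone_cons_false_iff.2 fun _ _ _ => le_rfl)
  rw [twoZeroSortedRows_iff_of_monotone monotone_row]
  have zeroCount_row_one : 1 + zeroCount (M 0) = 2 ↔ zeroCount (M 0) = 1 := by omega
  simp [extend, Fin.forall_fin_succ, border_zero, border_succ, zeroCount_cons, zeroCount_top,
    binVal_cons_le_cons_iff, Monotone, zeroCount_row_one, and_assoc]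

lemma twoZeroSortedRows_addBlock_iff {B : Matrix (Fin n) (Fin n) Bool} :
    TwoZeroSortedRows (addBlock B) ↔ TwoZeroSortedRows B := by
  rw [addBlock, twoZeroSortedRows_extend_iff]
  simp [border_zero, border_succ, zeroCount_cons, zeroCount_top, binVal_cons_le_cons_iff,
    Monotone, TwoZeroSortedRows]

lemma twoZeroSortedRows_growBlock_iff {B : Matrix (Fin (n + 1)) (Fin (n + 1)) Bool}
    (h : B 0 0 = false) :
    TwoZeroSortedRows (growBlock B) ↔
      (∀ i, zeroCount (B i) = 2) ∧ Monotone fun i : Fin n => binVal (B i.succ) := by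
  have zeroCount_flip : zeroCount (flipCorner B 0) = 1 ↔ zeroCount (B 0) = 2 := by
    rw [← Fin.cons_self_tail (B 0), flipCorner, border_zero, zeroCount_cons, zeroCount_cons, h]
    simp only [Bool.not_false, reduceCtorEq, ↓reduceIte]
    omega
  have flip_succ (i : Fin n) : flipCorner B i.succ = B i.succ := Fin.cons_self_tail (B i.succ)
  simp only [growBlock, twoZeroSortedRows_extend_iff, flip_succ, Fin.forall_fin_succ,
    zeroCount_flip, and_assoc]

lemma twoZeroCanonical_addBlock_iff {B : Matrix (Fin n) (Fin n) Bool} :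
    TwoZeroCanonical (addBlock B) ↔ TwoZeroCanonical B := by
  simp only [TwoZeroCanonical, transpose_addBlock, twoZeroSortedRows_addBlock_iff]

lemma twoZeroCanonical_growBlock_iff {B : Matrix (Fin (n + 1)) (Fin (n + 1)) Bool}
    (h : B 0 0 = false) : TwoZeroCanonical (growBlock B) ↔ TwoZeroCanonical B := by
  rw [twoZeroCanonical_iff_of_apply_zero_zero h, TwoZeroCanonical, transpose_growBlock,
    twoZeroSortedRows_growBlock_iff h, twoZeroSortedRows_growBlock_iff (B := Bᵀ) h]

lemma TwoZeroCanonical.apply_zero {A : Matrix (Fin (n + 2)) (Fin (n + 2)) Bool}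
    (h : TwoZeroCanonical A) : A 0 = Fin.cons false (Fin.cons false ⊤) := by
  obtain ⟨v, hA, hv, hvz⟩ :=
    exists_eq_cons_false_of_monotone (monotone_row_of_monotone_binVal h.2.2) (h.1.1 0)
  obtain ⟨w, rfl, -, hw⟩ := exists_eq_cons_false_of_monotone hv hvz
  rw [hA, zeroCount_eq_zero_iff.1 hw]

lemma TwoZeroCanonical.extend_minor {A : Matrix (Fin (n + 2)) (Fin (n + 2)) Bool}
    (h : TwoZeroCanonical A) : extend (minor A) = A := by
  conv_rhs => rw [← border_minor A, h.apply_zero, h.transpose.apply_zero]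
  rfl

lemma TwoZeroCanonical.exists_addBlock_eq {A : Matrix (Fin (n + 2)) (Fin (n + 2)) Bool}
    (h : TwoZeroCanonical A) (h11 : minor A 0 0 = false) :
    ∃ B, TwoZeroCanonical B ∧ addBlock B = A := by
  have tail_eq_top {A : Matrix (Fin (n + 2)) (Fin (n + 2)) Bool} (h : TwoZeroCanonical A)
      (h11 : minor A 0 0 = false) : Fin.tail (minor A 0) = ⊤ := by
    rw [← h.extend_minor] at h
    have hz := (twoZeroSortedRows_extend_iff.1 h.1).1
    rw [← Fin.cons_self_tail (minor A 0), h11, zeroCount_cons, if_pos rfl] at hz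
    exact zeroCount_eq_zero_iff.1 (by omega)
  have hA : addBlock (minor (minor A)) = A := by
    conv_rhs => rw [← h.extend_minor, ← border_minor (minor A), h11, tail_eq_top h h11]
    exact congrArg (fun c => extend (border false ⊤ c _)) (tail_eq_top h.transpose h11).symm
  exact ⟨minor (minor A), twoZeroCanonical_addBlock_iff.1 (by rwa [hA]), hA⟩

lemma TwoZeroCanonical.exists_growBlock_eq {A : Matrix (Fin (n + 2)) (Fin (n + 2)) Bool}
    (h : TwoZeroCanonical A) (h11 : minor A 0 0 = true) :
    ∃ B, TwoZeroCanonical B ∧ growBlock B = A := by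
  have hA : growBlock (flipCorner (minor A)) = A := by
    rw [growBlock, flipCorner_involutive, h.extend_minor]
  have corner : flipCorner (minor A) 0 0 = false := congrArg Bool.not h11
  exact ⟨flipCorner (minor A), (twoZeroCanonical_growBlock_iff corner).1 (by rwa [hA]), hA⟩

lemma setOf_twoZeroCanonical (n : ℕ) :
    {A : Matrix (Fin (n + 3)) (Fin (n + 3)) Bool | TwoZeroCanonical A} =
      addBlock '' {B | TwoZeroCanonical B} ∪ growBlock '' {B | TwoZeroCanonical B} := by
  ext A
  constructor
  · intro h
    cases h11 : minor A 0 0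
    · exact Or.inl (TwoZeroCanonical.exists_addBlock_eq h h11)
    · exact Or.inr (TwoZeroCanonical.exists_growBlock_eq h h11)
  · rintro (⟨B, hB, rfl⟩ | ⟨B, hB, rfl⟩)
    · exact twoZeroCanonical_addBlock_iff.2 hB
    · exact (twoZeroCanonical_growBlock_iff (congrFun hB.apply_zero 0)).2 hB

lemma disjoint_image_addBlock_image_growBlock (n : ℕ) :
    Disjoint (addBlock '' {B : Matrix (Fin (n + 1)) (Fin (n + 1)) Bool | TwoZeroCanonical B})
      (growBlock '' {B | TwoZeroCanonical B}) := by
  rw [Set.disjoint_left]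
  rintro _ ⟨B, -, rfl⟩ ⟨B', hB', h⟩
  have corner : (!B' 0 0) = false := congrFun (congrFun h 1) 1
  rw [hB'.apply_zero] at corner
  exact Bool.noConfusion corner

lemma ncard_twoZeroCanonical_add_three (n : ℕ) :
    {A : Matrix (Fin (n + 3)) (Fin (n + 3)) Bool | TwoZeroCanonical A}.ncard =
      {A : Matrix (Fin (n + 1)) (Fin (n + 1)) Bool | TwoZeroCanonical A}.ncard +
        {A : Matrix (Fin (n + 2)) (Fin (n + 2)) Bool | TwoZeroCanonical A}.ncard := by
  rw [setOf_twoZeroCanonical, Set.ncard_union_eq (disjoint_image_addBlock_image_growBlock n),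
    Set.ncard_image_of_injective _ addBlock_injective,
    Set.ncard_image_of_injective _ growBlock_injective]

end TwoZeros

end CanonicalCount

theorem canonical_count_recurrence (k : ℕ) (hk : 3 ≤ k) :
    C (k + 2) k = C k (k - 2) + C (k + 1) (k - 1) := by
  obtain ⟨n, rfl⟩ : ∃ n, k = n + 2 := Nat.exists_eq_add_of_le' (by omega)
  change C (n + 4) (n + 2) = C (n + 2) n + C (n + 3) (n + 1)
  rw [CanonicalCount.C_add_two, CanonicalCount.C_add_two, CanonicalCount.C_add_two]
  exact CanonicalCount.ncard_twoZeroCanonical_add_three (n + 1)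
end
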